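/- For generic α ∈ ℂ, the gauge variable 𝒱_α = Φ_ξ(α)·V_α satisfies (ŵ − w̃)·𝒱̂̃_α = Φ_δ(α)·𝒱̂_α − Φ_ε(α)·𝒱̃_α, where Φ_δ(α) = σ(α+δ)/(σ(δ)σ(α)) and Φ_ε(α) = σ(α+ε)/(σ(ε)σ(α)), 𝒱̂̃_α denotes 𝒱_α evaluated at (n+1,m+1,h), 𝒱̂_α at (n,m+1,h), 𝒱̃_α at (n+1,m,h), and similarly for w. (These coefficients Φ_δ(α), Φ_ε(α) are the precise, gauge-exact values of the coefficients p_α, q_α in the paper.) -/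

import Mathlib

open scoped BigOperators

noncomputable section

/-- A period lattice in `ℂ` spanned by two `ℝ`-independent periods. -/
structure EllLattice where
  ω₁ : ℂ
  ω₂ : ℂ
  indep : ∀ a b : ℝ, a • ω₁ + b • ω₂ = 0 → a = 0 ∧ b = 0

namespace EllLattice

/-- Membership in the lattice `Λ = ℤω₁ + ℤω₂`. -/
def mem (L : EllLattice) (z : ℂ) : Prop := ∃ m n : ℤ, z = m • L.ω₁ + n • L.ω₂

/-- The lattice point with integer coordinates `p = (m, n)`. -/
def per (L : EllLattice) (p : ℤ × ℤ) : ℂ := p.1 • L.ω₁ + p.2 • L.ω₂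

/-- The Weierstrass sigma function associated to the lattice, defined by its
Hadamard product over the nonzero lattice points. -/
def sigma (L : EllLattice) (z : ℂ) : ℂ :=
  z * ∏' p : {p : ℤ × ℤ // p ≠ 0},
      ((1 - z / L.per p.1) *
        Complex.exp (z / L.per p.1 + z ^ 2 / (2 * (L.per p.1) ^ 2)))

/-- The Weierstrass zeta function `ζ = σ′/σ`. -/
def zeta (L : EllLattice) (z : ℂ) : ℂ := deriv L.sigma z / L.sigma z

/-- The Weierstrass `℘`-function `℘ = −ζ′`. -/
def wp (L : EllLattice) (z : ℂ) : ℂ := - deriv L.zeta z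

/-- `Φ_ξ(κ) = σ(ξ+κ)/(σ(ξ)σ(κ))`. -/
def Phi (L : EllLattice) (ξ κ : ℂ) : ℂ := L.sigma (ξ + κ) / (L.sigma ξ * L.sigma κ)

/-- The Lamé function `Ψ_ξ(κ) = Φ_ξ(κ)·e^{−ζ(ξ)κ}`. -/
def Psi (L : EllLattice) (ξ κ : ℂ) : ℂ := L.Phi ξ κ * Complex.exp (-(L.zeta ξ) * κ)

/-- `η_δ(ξ) = ζ(ξ+δ) − ζ(ξ) − ζ(δ)`. -/
def eta (L : EllLattice) (δ ξ : ℂ) : ℂ := L.zeta (ξ + δ) - L.zeta ξ - L.zeta δ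

/-- `χ_{α,β}(ξ) = ζ(α) + ζ(β) + ζ(ξ) − ζ(ξ+α+β)`. -/
def chi (L : EllLattice) (α β ξ : ℂ) : ℂ :=
  L.zeta α + L.zeta β + L.zeta ξ - L.zeta (ξ + α + β)

end EllLattice

open Matrix

/-- All the data entering the elliptic (N,N′)-soliton solutions of the lattice KP system:
a period lattice, lattice parameters `δ, ε, λ`, a base point `ξ₀`, rapidity parameters
`κ_i, κ′_j`, initial plane-wave constants `ρ⁰_i, ν⁰_j` and a constant `N′×N` matrix `C`. -/
structure KPData (N N' : ℕ) where
  L : EllLattice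
  del : ℂ
  eps : ℂ
  lam : ℂ
  xi0 : ℂ
  κ : Fin N → ℂ
  κ' : Fin N' → ℂ
  ρ0 : Fin N → ℂ
  ν0 : Fin N' → ℂ
  C : Matrix (Fin N') (Fin N) ℂ

namespace KPData

variable {N N' : ℕ}

/-- `ξ = ξ₀ + nδ + mε + hλ`. -/
def xi (D : KPData N N') (n m h : ℤ) : ℂ :=
  D.xi0 + n • D.del + m • D.eps + h • D.lam

/-- The plane-wave factor `ρ_i(n,m,h)`. -/
def ρ (D : KPData N N') (i : Fin N) (n m h : ℤ) : ℂ :=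
  (Complex.exp (-(D.L.zeta D.del) * D.κ i) * D.L.Psi D.del (-(D.κ i))) ^ n *
  (Complex.exp (-(D.L.zeta D.eps) * D.κ i) * D.L.Psi D.eps (-(D.κ i))) ^ m *
  (Complex.exp (-(D.L.zeta D.lam) * D.κ i) * D.L.Psi D.lam (-(D.κ i))) ^ h *
  Complex.exp (D.L.zeta (D.xi n m h) * D.κ i) * D.ρ0 i

/-- The plane-wave factor `ν_j(n,m,h)`. -/
def ν (D : KPData N N') (j : Fin N') (n m h : ℤ) : ℂ :=
  (Complex.exp (D.L.zeta D.del * D.κ' j) * D.L.Psi D.del (D.κ' j)) ^ (-n) *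
  (Complex.exp (D.L.zeta D.eps * D.κ' j) * D.L.Psi D.eps (D.κ' j)) ^ (-m) *
  (Complex.exp (D.L.zeta D.lam * D.κ' j) * D.L.Psi D.lam (D.κ' j)) ^ (-h) *
  Complex.exp (D.L.zeta (D.xi n m h) * D.κ' j) * D.ν0 j

/-- The dressed elliptic Cauchy matrix `M_{ij} = ρ_i Ψ_ξ(κ_i + κ′_j) ν_j`. -/
def M (D : KPData N N') (n m h : ℤ) : Matrix (Fin N) (Fin N') ℂ :=
  Matrix.of fun i j => D.ρ i n m h * D.L.Psi (D.xi n m h) (D.κ i + D.κ' j) * D.ν j n m h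

/-- The column vector `r = (ρ_i Ψ_ξ(κ_i))_i`. -/
def r (D : KPData N N') (n m h : ℤ) : Fin N → ℂ :=
  fun i => D.ρ i n m h * D.L.Psi (D.xi n m h) (D.κ i)

/-- The column vector `s = (ν_j Ψ_ξ(κ′_j))_j`. -/
def s (D : KPData N N') (n m h : ℤ) : Fin N' → ℂ :=
  fun j => D.ν j n m h * D.L.Psi (D.xi n m h) (D.κ' j)

/-- The τ-function `τ = det(1 + MC)`. -/
def τ (D : KPData N N') (n m h : ℤ) : ℂ := (1 + D.M n m h * D.C).det

/-- The diagonal matrix `χ_{α,K}(ξ) = diag(χ_{α,κ_i}(ξ))`. -/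
def DK (D : KPData N N') (α : ℂ) (n m h : ℤ) : Matrix (Fin N) (Fin N) ℂ :=
  Matrix.diagonal fun i => D.L.chi α (D.κ i) (D.xi n m h)

/-- The diagonal matrix `χ_{β,K′}(ξ) = diag(χ_{β,κ′_j}(ξ))`. -/
def DK' (D : KPData N N') (β : ℂ) (n m h : ℤ) : Matrix (Fin N') (Fin N') ℂ :=
  Matrix.diagonal fun j => D.L.chi β (D.κ' j) (D.xi n m h)

/-- `W_β = 1 − sᵀ (χ_{β,K′}(ξ))⁻¹ C (1+MC)⁻¹ r`. -/
def W (D : KPData N N') (β : ℂ) (n m h : ℤ) : ℂ :=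
  1 - D.s n m h ⬝ᵥ ((D.DK' β n m h)⁻¹ *ᵥ (D.C *ᵥ ((1 + D.M n m h * D.C)⁻¹ *ᵥ D.r n m h)))

/-- `V_α = 1 − sᵀ (1+CM)⁻¹ C (χ_{α,K}(ξ))⁻¹ r`. -/
def V (D : KPData N N') (α : ℂ) (n m h : ℤ) : ℂ :=
  1 - D.s n m h ⬝ᵥ ((1 + D.C * D.M n m h)⁻¹ *ᵥ (D.C *ᵥ ((D.DK α n m h)⁻¹ *ᵥ D.r n m h)))

/-- `w₀ = sᵀ C (1+MC)⁻¹ r`. -/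
def w0 (D : KPData N N') (n m h : ℤ) : ℂ :=
  D.s n m h ⬝ᵥ (D.C *ᵥ ((1 + D.M n m h * D.C)⁻¹ *ᵥ D.r n m h))

/-- `w = ζ(ξ) − w₀ − nζ(δ) − mζ(ε) − hζ(λ)`. -/
def w (D : KPData N N') (n m h : ℤ) : ℂ :=
  D.L.zeta (D.xi n m h) - D.w0 n m h - n • D.L.zeta D.del - m • D.L.zeta D.eps -
    h • D.L.zeta D.lam

/-- `S_{β,α} = sᵀ (χ_{β,K′}(ξ))⁻¹ C (1+MC)⁻¹ (χ_{α,K}(ξ))⁻¹ r`. -/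
def S (D : KPData N N') (β α : ℂ) (n m h : ℤ) : ℂ :=
  D.s n m h ⬝ᵥ ((D.DK' β n m h)⁻¹ *ᵥ
    (D.C *ᵥ ((1 + D.M n m h * D.C)⁻¹ *ᵥ ((D.DK α n m h)⁻¹ *ᵥ D.r n m h))))

/-- `u_α = (1+MC)⁻¹ (χ_{α,K}(ξ))⁻¹ r`. -/
def u (D : KPData N N') (α : ℂ) (n m h : ℤ) : Fin N → ℂ :=
  (1 + D.M n m h * D.C)⁻¹ *ᵥ ((D.DK α n m h)⁻¹ *ᵥ D.r n m h)

/-- `u₀ = (1+MC)⁻¹ r`. -/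
def u0 (D : KPData N N') (n m h : ℤ) : Fin N → ℂ :=
  (1 + D.M n m h * D.C)⁻¹ *ᵥ D.r n m h

/-- the adjoint (row) vector `ᵗu_β = sᵀ (χ_{β,K′}(ξ))⁻¹ (1+CM)⁻¹`. -/
def tu (D : KPData N N') (β : ℂ) (n m h : ℤ) : Fin N' → ℂ :=
  (D.s n m h ᵥ* (D.DK' β n m h)⁻¹) ᵥ* (1 + D.C * D.M n m h)⁻¹

/-- the adjoint (row) vector `ᵗu₀ = sᵀ (1+CM)⁻¹`. -/
def tu0 (D : KPData N N') (n m h : ℤ) : Fin N' → ℂ :=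
  D.s n m h ᵥ* (1 + D.C * D.M n m h)⁻¹

/-- The gauge variable `𝒱_α = Φ_ξ(α)·V_α`. -/
def calV (D : KPData N N') (α : ℂ) (n m h : ℤ) : ℂ :=
  D.L.Phi (D.xi n m h) α * D.V α n m h

/-- The gauge variable `𝒲_β = Φ_ξ(β)·W_β`. -/
def calW (D : KPData N N') (β : ℂ) (n m h : ℤ) : ℂ :=
  D.L.Phi (D.xi n m h) β * D.W β n m h

/-- The Schwarzian variable `Z_{β,α} = Φ_ξ(α+β)·(1 − χ_{α,β}(ξ)·S_{β,α})`. -/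
def Z (D : KPData N N') (β α : ℂ) (n m h : ℤ) : ℂ :=
  D.L.Phi (D.xi n m h) (α + β) * (1 - D.L.chi α β (D.xi n m h) * D.S β α n m h)

/-- Genericity of the parameters (together with finitely many auxiliary points `extra`):
no nontrivial integer combination of `ξ₀, δ, ε, λ`, the rapidity parameters and the
auxiliary points lies on the lattice.  In particular all arguments of `σ` occurring in
the soliton solutions and their shifts lie outside `Λ`. -/
def Generic {P : ℕ} (D : KPData N N') (extra : Fin P → ℂ) : Prop :=
  ∀ (c0 cn cm ch : ℤ) (a : Fin N → ℤ) (b : Fin N' → ℤ) (e : Fin P → ℤ),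
    ¬ (c0 = 0 ∧ cn = 0 ∧ cm = 0 ∧ ch = 0 ∧ a = 0 ∧ b = 0 ∧ e = 0) →
    ¬ D.L.mem (c0 • D.xi0 + cn • D.del + cm • D.eps + ch • D.lam +
      (∑ i, a i • D.κ i) + (∑ j, b j • D.κ' j) + ∑ t, e t • extra t)

end KPData


open Filter Topology in
/-- The elementary Weierstrass factor is close to one. -/
lemma SG_factor_bound (u : ℂ) (hu : ‖u‖ ≤ 1 / 2) :
    ‖(1 - u) * Complex.exp (u + u ^ 2 / 2) - 1‖ ≤ 2 * ‖u‖ ^ 3 := by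
  set w := u + u ^ 2 / 2 with hw
  have hn := norm_nonneg u
  have hw1 : ‖w‖ ≤ 5 / 4 * ‖u‖ := by
    calc ‖w‖ ≤ ‖u‖ + ‖u ^ 2 / 2‖ := norm_add_le _ _
      _ = ‖u‖ + ‖u‖ ^ 2 / 2 := by simp
      _ ≤ _ := by nlinarith
  have hw2 : ‖w‖ ≤ 1 := by linarith
  have hR := Complex.exp_bound hw2 (n := 3) (by norm_num)
  simp only [Finset.sum_range_succ, Finset.sum_range_zero] at hR
  norm_num [Nat.factorial] at hR
  set R := Complex.exp w - (1 + w + w ^ 2 / 2) with hRdef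
  have key : (1 - u) * Complex.exp w - 1 = (1 - u) * R
      + u ^ 3 * (-1 / 2 - 3 / 8 * u - u ^ 2 / 8) := by
    rw [hRdef, hw]; ring
  rw [key]
  have h1 : ‖1 - u‖ ≤ 3 / 2 := by
    calc ‖1 - u‖ ≤ ‖(1 : ℂ)‖ + ‖u‖ := norm_sub_le _ _
      _ ≤ _ := by rw [norm_one]; linarith
  have h2 : ‖(-1 / 2 - 3 / 8 * u - u ^ 2 / 8 : ℂ)‖ ≤ 3 / 4 := by
    calc ‖(-1 / 2 - 3 / 8 * u - u ^ 2 / 8 : ℂ)‖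
        ≤ ‖(-1 / 2 : ℂ)‖ + ‖(3 / 8 * u : ℂ)‖ + ‖(u ^ 2 / 8 : ℂ)‖ :=
          (norm_sub_le _ _).trans (by gcongr; exact norm_sub_le _ _)
      _ = 1 / 2 + 3 / 8 * ‖u‖ + ‖u‖ ^ 2 / 8 := by norm_num
      _ ≤ _ := by nlinarith
  have h3 : ‖R‖ ≤ (5 / 4 * ‖u‖) ^ 3 * (2 / 9) := by
    refine hR.trans ?_
    gcongr
  calc ‖(1 - u) * R + u ^ 3 * (-1 / 2 - 3 / 8 * u - u ^ 2 / 8)‖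
      ≤ ‖1 - u‖ * ‖R‖ + ‖u‖ ^ 3 * ‖(-1 / 2 - 3 / 8 * u - u ^ 2 / 8 : ℂ)‖ := by
        refine (norm_add_le _ _).trans ?_
        rw [norm_mul, norm_mul, norm_pow]
    _ ≤ 3 / 2 * ((5 / 4 * ‖u‖) ^ 3 * (2 / 9)) + ‖u‖ ^ 3 * (3 / 4) := by gcongr
    _ ≤ 2 * ‖u‖ ^ 3 := by nlinarith [pow_nonneg hn 3]

namespace EllLattice

/-- The Mathlib period pair of the lattice. -/
def pp (L : EllLattice) : PeriodPair where
  ω₁ := L.ω₁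
  ω₂ := L.ω₂
  indep := LinearIndependent.pair_iff.mpr L.indep

lemma mem_iff (L : EllLattice) (z : ℂ) : L.mem z ↔ z ∈ L.pp.lattice := by
  rw [PeriodPair.mem_lattice]
  simp only [EllLattice.mem, pp, zsmul_eq_mul]
  constructor
  · rintro ⟨m, n, h⟩; exact ⟨m, n, h.symm⟩
  · rintro ⟨m, n, h⟩; exact ⟨m, n, h.symm⟩

/-- The Weierstrass factor at a lattice point (equal to one at the origin). -/
def fac (l z : ℂ) : ℂ := (1 - z / l) * Complex.exp (z / l + z ^ 2 / (2 * l ^ 2))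

lemma fac_differentiable (l : ℂ) : Differentiable ℂ (fac l) := by
  unfold fac; fun_prop

lemma fac_bound (r : ℝ) (hr : 0 < r) (l z : ℂ) (hz : ‖z‖ < r) (hl : 2 * r ≤ ‖l‖) :
    ‖fac l z - 1‖ ≤ 2 * r ^ 3 * ‖l‖ ^ (-3 : ℝ) := by
  have hl0 : 0 < ‖l‖ := by linarith
  have hu : ‖z / l‖ ≤ r / ‖l‖ := by rw [norm_div]; gcongr
  have hu2 : r / ‖l‖ ≤ 1 / 2 := by rw [div_le_div_iff₀ hl0 (by norm_num)]; linarith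
  have := SG_factor_bound (z / l) (hu.trans hu2)
  have e : fac l z = (1 - z / l) * Complex.exp (z / l + (z / l) ^ 2 / 2) := by
    unfold fac; congr 3; rw [div_pow, div_div, mul_comm]
  rw [e]
  refine this.trans ?_
  calc 2 * ‖z / l‖ ^ 3 ≤ 2 * (r / ‖l‖) ^ 3 := by gcongr
    _ = 2 * r ^ 3 / ‖l‖ ^ 3 := by rw [div_pow]; ring
    _ = _ := by rw [div_eq_mul_inv, Real.rpow_neg hl0.le]; norm_cast

lemma summable_cube (L : EllLattice) : Summable fun l : L.pp.lattice => ‖l‖ ^ (-3 : ℝ) :=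
  ZLattice.summable_norm_rpow _ _ (by simp; norm_num)

lemma cofinite_large (L : EllLattice) (R : ℝ) :
    ∀ᶠ l : L.pp.lattice in Filter.cofinite, R ≤ ‖(l : ℂ)‖ := by
  refine (isCompact_iff_finite.mp (isCompact_closedBall (0 : L.pp.lattice) R)).subset ?_
  intro l hl
  simp at hl ⊢
  exact hl.le

/-- The product part of sigma. -/
def pr (L : EllLattice) (z : ℂ) : ℂ := ∏' l : L.pp.lattice, fac l z

lemma sigma_eq (L : EllLattice) (z : ℂ) : L.sigma z = z * L.pr z := by
  unfold sigma pr
  congr 1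
  have h1 : ∏' l : L.pp.lattice, fac l z = ∏' p : ℤ × ℤ, fac (L.per p) z := by
    rw [← L.pp.latticeEquivProd.symm.toEquiv.tprod_eq]
    refine tprod_congr fun p => ?_
    have := L.pp.latticeEquiv_symm_apply p
    simp only [LinearEquiv.coe_toEquiv] at this ⊢
    rw [this]; simp [per, pp]
  rw [h1]
  rw [← tprod_subtype_eq_of_mulSupport_subset (s := {p : ℤ × ℤ | p ≠ 0})]
  · rfl
  · intro p hp h0
    apply hp
    have : L.per p = 0 := by rw [h0]; simp [per]
    simp [this, fac]

lemma multipliable_ball (L : EllLattice) (r : ℝ) (hr : 0 < r) :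
    MultipliableLocallyUniformlyOn (fun (l : L.pp.lattice) z => fac l z) (Metric.ball 0 r) := by
  have := Summable.multipliableLocallyUniformlyOn_one_add (K := Metric.ball (0 : ℂ) r)
    (f := fun (l : L.pp.lattice) z => fac l z - 1)
    (hK := Metric.isOpen_ball) (hu := L.summable_cube.mul_left (2 * r ^ 3)) ?_ ?_
  · simpa using this
  · filter_upwards [L.cofinite_large (2 * r)] with l hl z hz
    exact fac_bound r hr l z (by simpa using hz) hl
  · intro l
    exact ((fac_differentiable l).sub_const 1).continuous.continuousOn

lemma pr_differentiable (L : EllLattice) : Differentiable ℂ L.pr := by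
  intro z
  have hr : 0 < ‖z‖ + 1 := by positivity
  have h := (L.multipliable_ball _ hr).hasProdLocallyUniformlyOn.differentiableOn
    (.of_forall fun s => by
      exact DifferentiableOn.fun_finsetProd
        (fun l _ => (fac_differentiable l).differentiableOn)) Metric.isOpen_ball
  exact h.differentiableAt (Metric.isOpen_ball.mem_nhds (by simp))

lemma pr_zero (L : EllLattice) : L.pr 0 = 1 := by
  simp [pr, fac]

lemma fac_ne_zero {l z : ℂ} (h : z ≠ l ∨ l = 0) : fac l z ≠ 0 := by
  unfold fac
  refine mul_ne_zero ?_ (Complex.exp_ne_zero _)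
  by_cases hl : l = 0
  · simp [hl]
  · intro h0
    rw [sub_eq_zero, eq_div_iff hl, one_mul] at h0
    rcases h with h | h
    · exact h h0.symm
    · exact hl h

lemma pr_ne_zero (L : EllLattice) {z : ℂ} (hz : z ∉ L.pp.lattice) : L.pr z ≠ 0 := by
  have := tprod_one_add_ne_zero_of_summable (f := fun l : L.pp.lattice => fac l z - 1) ?_ ?_
  · simpa [pr] using this
  · intro l
    simp only [add_sub_cancel]
    refine fac_ne_zero (.inl ?_)
    rintro rfl
    exact hz l.2
  · have hr : 0 < ‖z‖ + 1 := by positivity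
    refine Summable.of_norm_bounded_eventually
      (L.summable_cube.mul_left (2 * (‖z‖ + 1) ^ 3)) ?_
    filter_upwards [L.cofinite_large (2 * (‖z‖ + 1))] with l hl
    rw [norm_norm]
    exact fac_bound _ hr l z (by simp) hl

lemma pr_mem (L : EllLattice) {z : ℂ} (hz : z ∈ L.pp.lattice) (h0 : z ≠ 0) : L.pr z = 0 := by
  refine tprod_of_exists_eq_zero ⟨⟨z, hz⟩, ?_⟩
  simp [fac, h0]

lemma sigma_fun (L : EllLattice) : L.sigma = fun z => z * L.pr z := funext L.sigma_eq

lemma sigma_differentiable (L : EllLattice) : Differentiable ℂ L.sigma := by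
  rw [sigma_fun]
  exact differentiable_id.mul L.pr_differentiable

lemma sigma_eq_zero_iff (L : EllLattice) (z : ℂ) : L.sigma z = 0 ↔ z ∈ L.pp.lattice := by
  rw [sigma_eq]
  constructor
  · intro h
    by_contra hz
    rcases mul_eq_zero.mp h with h | h
    · exact hz (h ▸ zero_mem _)
    · exact L.pr_ne_zero hz h
  · intro h
    by_cases h0 : z = 0
    · simp [h0]
    · simp [L.pr_mem h h0]

lemma deriv_sigma_zero (L : EllLattice) : deriv L.sigma 0 = 1 := by
  rw [sigma_fun, deriv_fun_mul differentiableAt_fun_id (L.pr_differentiable 0)]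
  simp [pr_zero]

lemma sigma_neg (L : EllLattice) (z : ℂ) : L.sigma (-z) = - L.sigma z := by
  rw [sigma_eq, sigma_eq]
  have : L.pr (-z) = L.pr z := by
    unfold pr
    rw [← (Equiv.neg L.pp.lattice).tprod_eq]
    refine tprod_congr fun l => ?_
    simp [fac]
  rw [this]; ring

lemma deriv_sigma_neg (L : EllLattice) (z : ℂ) : deriv L.sigma (-z) = deriv L.sigma z := by
  have h : (fun x => L.sigma (-x)) = fun x => - L.sigma x := funext L.sigma_neg
  have h2 := congrArg (fun f => deriv f z) h
  simp only [deriv_comp_neg, deriv.fun_neg] at h2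
  exact neg_injective h2

lemma zeta_neg (L : EllLattice) (z : ℂ) : L.zeta (-z) = - L.zeta z := by
  simp [zeta, sigma_neg, deriv_sigma_neg, div_neg]

end EllLattice

namespace EllLattice

/-- The summand of the zeta series (equal to `1/z` at the origin). -/
def gz (l z : ℂ) : ℂ := 1 / (z - l) + 1 / l + z / l ^ 2

/-- The zeta series. -/
def zt (L : EllLattice) (z : ℂ) : ℂ := ∑' l : L.pp.lattice, gz l z

lemma gz_bound (r : ℝ) (hr : 0 < r) (z : ℂ) (hz : ‖z‖ < r) (l : ℂ) (hl : 2 * r ≤ ‖l‖) :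
    ‖gz l z‖ ≤ 2 * r ^ 2 * ‖l‖ ^ (-3 : ℝ) := by
  have hl0 : 0 < ‖l‖ := by linarith
  have hl1 : l ≠ 0 := norm_pos_iff.mp hl0
  have hd : ‖l‖ / 2 ≤ ‖z - l‖ := by
    rw [norm_sub_rev]
    exact .trans (by linarith) (norm_sub_norm_le l z)
  have hzl : z - l ≠ 0 := norm_pos_iff.mp (by linarith)
  have e : gz l z = z ^ 2 / (l ^ 2 * (z - l)) := by
    unfold gz; field_simp; ring
  rw [e, norm_div, norm_mul, norm_pow, norm_pow]
  calc ‖z‖ ^ 2 / (‖l‖ ^ 2 * ‖z - l‖) ≤ r ^ 2 / (‖l‖ ^ 2 * (‖l‖ / 2)) := by gcongr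
    _ = 2 * r ^ 2 / ‖l‖ ^ 3 := by field_simp
    _ = _ := by rw [div_eq_mul_inv, Real.rpow_neg hl0.le]; norm_cast

lemma hasSum_zt (L : EllLattice) :
    HasSumLocallyUniformly (fun (l : L.pp.lattice) z => gz l z) L.zt := by
  refine L.pp.hasSumLocallyUniformly_aux _ (fun r l => 2 * r ^ 2 * ‖l‖ ^ (-3 : ℝ))
    (fun r _ => L.summable_cube.mul_left _) fun r hr => Filter.eventually_atTop.mpr ⟨2 * r, ?_⟩
  rintro _ h z hz l rfl
  exact gz_bound r hr z hz l h

lemma gz_hasDerivAt (l z : ℂ) (h : z - l ≠ 0) :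
    HasDerivAt (gz l) (-(1 / (z - l) ^ 2 - 1 / l ^ 2)) z := by
  unfold gz
  have h1 : HasDerivAt (fun z => z - l) 1 z := (hasDerivAt_id z).sub_const l
  have h2 := (h1.fun_inv h).add_const (1 / l)
  have h3 := h2.add ((hasDerivAt_id z).div_const (l ^ 2))
  convert! h3 using 1
  · ext y; simp
  · ring

lemma zt_hasDerivAt (L : EllLattice) {z : ℂ} (hz : z ∉ L.pp.lattice) :
    HasDerivAt L.zt (-(L.pp.weierstrassP z)) z := by
  have hne : ∀ (l : L.pp.lattice) (x : ℂ), x ∈ (L.pp.lattice : Set ℂ)ᶜ → x - l ≠ 0 := by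
    intro l x hx h
    rw [sub_eq_zero] at h
    exact hx (h ▸ l.2)
  have hopen : IsOpen (L.pp.lattice : Set ℂ)ᶜ := L.pp.isClosed_lattice.isOpen_compl
  have hfin : ∀ s : Finset L.pp.lattice,
      DifferentiableOn ℂ (fun z => ∑ l ∈ s, gz l z) (L.pp.lattice : Set ℂ)ᶜ := by
    intro s
    exact .fun_sum fun l _ x hx =>
      (gz_hasDerivAt l x (hne l x hx)).differentiableAt.differentiableWithinAt
  have hd : DifferentiableOn ℂ L.zt (L.pp.lattice : Set ℂ)ᶜ :=
    L.hasSum_zt.hasSumLocallyUniformlyOn.differentiableOn (.of_forall hfin) hopen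
  have heq : Set.EqOn (deriv L.zt) (fun z => -(L.pp.weierstrassP z)) (L.pp.lattice : Set ℂ)ᶜ := by
    refine (L.hasSum_zt.tendstoLocallyUniformlyOn.deriv (.of_forall hfin) hopen).unique ?_
    have := L.pp.hasSumLocallyUniformly_weierstrassP.tendstoLocallyUniformlyOn
      (s := (L.pp.lattice : Set ℂ)ᶜ)
    refine this.neg.congr ?_
    intro s x hx
    simp only [Function.comp_apply]
    rw [deriv_fun_sum (fun (l : L.pp.lattice) _ => (gz_hasDerivAt l x (hne l x hx)).differentiableAt)]
    simp only [Pi.neg_apply]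
    rw [← Finset.sum_neg_distrib]
    exact Finset.sum_congr rfl fun l _ => (gz_hasDerivAt l x (hne l x hx)).deriv.symm
  have := (hd.differentiableAt (hopen.mem_nhds hz)).hasDerivAt
  rwa [heq hz] at this

lemma logDeriv_fac (l z : ℂ) (h : z - l ≠ 0) :
    logDeriv (fac l) z = gz l z - (if l = 0 then 1 / z else 0) := by
  by_cases hl : l = 0
  · subst hl
    have : fac 0 = fun _ => 1 := by ext; simp [fac]
    simp [this, logDeriv, gz]
  · rw [if_neg hl, sub_zero]
    have e : fac l = fun z => (1 - z / l) * Complex.exp (z / l + z ^ 2 / (2 * l ^ 2)) := rfl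
    have h1 : HasDerivAt (fun z => 1 - z / l) (-(1 / l)) z := by
      simpa using ((hasDerivAt_id z).div_const l).const_sub 1
    have h2 : HasDerivAt (fun z => z / l + z ^ 2 / (2 * l ^ 2)) (1 / l + z / l ^ 2) z := by
      have := ((hasDerivAt_id z).div_const l).add ((hasDerivAt_pow 2 z).div_const (2 * l ^ 2))
      convert! this using 1
      simp; field_simp
    have h3 := h1.mul h2.cexp
    have hne : (1 - z / l) ≠ 0 := by
      intro h0
      rw [sub_eq_zero, eq_div_iff hl, one_mul] at h0
      exact h (by rw [h0, sub_self])
    have hlz : l - z ≠ 0 := by rw [← neg_sub]; exact neg_ne_zero.mpr h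
    rw [logDeriv_apply, e]
    erw [h3.deriv]
    have hex := Complex.exp_ne_zero (z / l + z ^ 2 / (2 * l ^ 2))
    rw [div_eq_iff (mul_ne_zero hne hex)]
    have : -(1 / l) = gz l z * (1 - z / l) - (1 - z / l) * (1 / l + z / l ^ 2) := by
      unfold gz; field_simp; ring
    rw [this]; ring

lemma zeta_eq_zt (L : EllLattice) {z : ℂ} (hz : z ∉ L.pp.lattice) : L.zeta z = L.zt z := by
  have hz0 : z ≠ 0 := fun h => hz (h ▸ zero_mem _)
  have hne : ∀ l : L.pp.lattice, z - l ≠ 0 := by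
    intro l h
    rw [sub_eq_zero] at h
    exact hz (h ▸ l.2)
  have hs : HasSum (fun l : L.pp.lattice => logDeriv (fac l) z) (L.zt z - 1 / z) := by
    have h1 : HasSum (fun l : L.pp.lattice => gz l z) (L.zt z) := L.hasSum_zt.hasSum
    have h2 : HasSum (fun l : L.pp.lattice => if l = 0 then 1 / z else 0) (1 / z) :=
      hasSum_ite_eq 0 _
    refine (h1.sub h2).congr_fun ?_
    intro l
    rw [logDeriv_fac _ _ (hne l)]
    simp
  have hlog := logDeriv_tprod_eq_tsum (s := Metric.ball 0 (‖z‖ + 1)) (x := z)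
    (f := fun (l : L.pp.lattice) z => fac l z) Metric.isOpen_ball (by simp)
    (fun l => fac_ne_zero (.inl (sub_ne_zero.mp (hne l))))
    (fun l => (fac_differentiable l).differentiableOn) hs.summable
    (L.multipliable_ball _ (by positivity)) (L.pr_ne_zero hz)
  rw [hs.tsum_eq] at hlog
  change logDeriv L.pr z = _ at hlog
  change logDeriv L.sigma z = _
  rw [sigma_fun, logDeriv_mul (f := fun z => z) z hz0 (L.pr_ne_zero hz) differentiableAt_fun_id
    (L.pr_differentiable z), hlog]
  simp [logDeriv_apply]

lemma zeta_hasDerivAt (L : EllLattice) {z : ℂ} (hz : z ∉ L.pp.lattice) :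
    HasDerivAt L.zeta (-(L.pp.weierstrassP z)) z := by
  refine (L.zt_hasDerivAt hz).congr_of_eventuallyEq ?_
  filter_upwards [L.pp.isClosed_lattice.isOpen_compl.mem_nhds hz] with x hx
  exact L.zeta_eq_zt hx

lemma add_notMem (L : EllLattice) {z w : ℂ} (hz : z ∉ L.pp.lattice) (hw : w ∈ L.pp.lattice) :
    z + w ∉ L.pp.lattice := by
  intro h
  exact hz (by simpa using sub_mem h hw)

lemma const_of_deriv (L : EllLattice) (f : ℂ → ℂ)
    (hf : ∀ z ∉ L.pp.lattice, HasDerivAt f 0 z) :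
    ∃ c, ∀ z ∉ L.pp.lattice, f z = c := by
  have hopen : IsOpen (L.pp.lattice : Set ℂ)ᶜ := L.pp.isClosed_lattice.isOpen_compl
  have hc : (L.pp.lattice : Set ℂ).Countable := by
    have : Countable L.pp.lattice := L.pp.latticeEquivProd.toEquiv.countable_iff.mpr inferInstance
    exact Set.countable_coe_iff.mp this
  have hconn : IsPreconnected (L.pp.lattice : Set ℂ)ᶜ :=
    (hc.isConnected_compl_of_one_lt_rank (by simp)).isPreconnected
  obtain ⟨c, hc⟩ := hopen.exists_is_const_of_deriv_eq_zero hconn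
    (fun z hz => (hf z hz).differentiableAt.differentiableWithinAt) (fun z hz => (hf z hz).deriv)
  exact ⟨c, fun z hz => hc z hz⟩

lemma zeta_add (L : EllLattice) {w : ℂ} (hw : w ∈ L.pp.lattice) :
    ∃ η, ∀ z ∉ L.pp.lattice, L.zeta (z + w) = L.zeta z + η := by
  obtain ⟨c, hc⟩ := L.const_of_deriv (fun z => L.zeta (z + w) - L.zeta z) (by
    intro z hz
    have h1 := (L.zeta_hasDerivAt (L.add_notMem hz hw)).comp_add_const z w
    have h2 := h1.sub (L.zeta_hasDerivAt hz)
    have : L.pp.weierstrassP (z + w) = L.pp.weierstrassP z := L.pp.weierstrassP_add_coe z ⟨w, hw⟩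
    rw [this, sub_self] at h2
    exact h2)
  exact ⟨c, fun z hz => by rw [← hc z hz]; ring⟩

lemma sigma_add (L : EllLattice) {w : ℂ} (hw : w ∈ L.pp.lattice) :
    ∃ c η : ℂ, c ≠ 0 ∧ ∀ z, L.sigma (z + w) = c * Complex.exp (η * z) * L.sigma z := by
  obtain ⟨η, hη⟩ := L.zeta_add hw
  have hne : ∀ z ∉ L.pp.lattice, L.sigma z ≠ 0 := fun z hz h => hz ((L.sigma_eq_zero_iff z).mp h)
  obtain ⟨c, hc⟩ := L.const_of_deriv
      (fun z => L.sigma (z + w) * Complex.exp (-(η * z)) / L.sigma z) (by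
    intro z hz
    have h1 := (L.sigma_differentiable (z + w)).hasDerivAt.comp_add_const z w
    have h2 : HasDerivAt (fun z => Complex.exp (-(η * z))) (Complex.exp (-(η * z)) * (-η)) z := by
      have := ((hasDerivAt_id z).const_mul η).neg.cexp
      simpa using this
    have h3 := (h1.mul h2).div (L.sigma_differentiable z).hasDerivAt (hne z hz)
    convert! h3 using 1
    have e := hη z hz
    unfold zeta at e
    have n1 := hne z hz
    have n2 := hne _ (L.add_notMem hz hw)
    symm
    rw [div_eq_zero_iff]; left
    have e' : deriv L.sigma (z + w) * L.sigma z
        = (deriv L.sigma z + η * L.sigma z) * L.sigma (z + w) := by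
      field_simp at e
      linear_combination e
    simp only [Pi.mul_apply]
    linear_combination Complex.exp (-(η * z)) * e')
  have hform : ∀ z, L.sigma (z + w) = c * Complex.exp (η * z) * L.sigma z := by
    intro z
    by_cases hz : z ∈ L.pp.lattice
    · rw [(L.sigma_eq_zero_iff z).mpr hz, (L.sigma_eq_zero_iff _).mpr (add_mem hz hw), mul_zero]
    · rw [← hc z hz, Complex.exp_neg]
      have n1 := hne z hz
      have := Complex.exp_ne_zero (η * z)
      field_simp
  refine ⟨c, η, ?_, hform⟩
  rintro rfl
  have h := hform (L.pp.ω₁ / 2)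
  rw [zero_mul, zero_mul] at h
  exact hne _ (L.add_notMem L.pp.ω₁_div_two_notMem_lattice hw) h

lemma deriv_sigma_add (L : EllLattice) {w c η : ℂ}
    (h : ∀ z, L.sigma (z + w) = c * Complex.exp (η * z) * L.sigma z) (z : ℂ) :
    deriv L.sigma (z + w) = c * Complex.exp (η * z) * (deriv L.sigma z + η * L.sigma z) := by
  have h1 := (L.sigma_differentiable (z + w)).hasDerivAt.comp_add_const z w
  have h2 : HasDerivAt (fun z => Complex.exp (η * z)) (Complex.exp (η * z) * η) z := by
    have := ((hasDerivAt_id z).const_mul η).cexp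
    simpa using this
  have h3 := (h2.const_mul c).mul (L.sigma_differentiable z).hasDerivAt
  have e : (fun z => L.sigma (z + w)) = fun z => c * Complex.exp (η * z) * L.sigma z := funext h
  rw [e] at h1
  rw [h1.unique h3]; ring

lemma deriv_sigma_ne (L : EllLattice) {w : ℂ} (hw : w ∈ L.pp.lattice) : deriv L.sigma w ≠ 0 := by
  obtain ⟨c, η, hc, h⟩ := L.sigma_add hw
  have := L.deriv_sigma_add h 0
  rw [zero_add, deriv_sigma_zero, (L.sigma_eq_zero_iff 0).mpr (zero_mem _)] at this
  rw [this]
  simpa using hc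

end EllLattice

namespace EllLattice

open Filter Topology in
/-- A Liouville argument for quotients of quasi-periodic entire functions. -/
lemma liouville (L : EllLattice) (F D : ℂ → ℂ) (hF : Differentiable ℂ F) (hD : Differentiable ℂ D)
    (hz : ∀ z, D z = 0 → F z = 0 ∧ deriv D z ≠ 0)
    (hq : ∀ w ∈ L.pp.lattice, ∃ m : ℂ → ℂ, Differentiable ℂ m ∧ (∀ z, m z ≠ 0) ∧
      (∀ z, F (z + w) = m z * F z) ∧ ∀ z, D (z + w) = m z * D z)
    (z0 : ℂ) (h0 : D z0 ≠ 0) (h0' : F z0 = 0) (z : ℂ) : F z = 0 := by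
  classical
  let G : ℂ → ℂ := fun z => if D z = 0 then deriv F z / deriv D z else F z / D z
  have hG : Differentiable ℂ G := by
    intro x
    by_cases hx : D x = 0
    · obtain ⟨hFx, hDx⟩ := hz x hx
      have dF : Differentiable ℂ (dslope F x) := by
        have := (Complex.differentiableOn_dslope (s := Set.univ) (c := x) (f := F) univ_mem).mpr
          hF.differentiableOn
        exact differentiableOn_univ.mp this
      have dD : Differentiable ℂ (dslope D x) := by
        have := (Complex.differentiableOn_dslope (s := Set.univ) (c := x) (f := D) univ_mem).mpr
          hD.differentiableOn
        exact differentiableOn_univ.mp this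
      have hsx : dslope D x x ≠ 0 := by rwa [dslope_same]
      have hq' : DifferentiableAt ℂ (fun y => dslope F x y / dslope D x y) x :=
        (dF x).div (dD x) hsx
      refine hq'.congr_of_eventuallyEq ?_
      filter_upwards [dD.continuous.continuousAt.eventually_ne hsx] with y hy
      by_cases hyx : y = x
      · subst hyx
        simp [G, hx, dslope_same]
      · have hyx' : y - x ≠ 0 := sub_ne_zero.mpr hyx
        have eF : dslope F x y = F y / (y - x) := by
          rw [dslope_of_ne _ hyx, slope_def_field, hFx, sub_zero]
        have eD : dslope D x y = D y / (y - x) := by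
          rw [dslope_of_ne _ hyx, slope_def_field, hx, sub_zero]
        have hDy : D y ≠ 0 := by
          intro h; rw [eD, h, zero_div] at hy; exact hy rfl
        simp only [G, if_neg hDy]
        rw [eF, eD, div_div_div_cancel_right₀ hyx']
    · have hq' : DifferentiableAt ℂ (fun y => F y / D y) x := (hF x).div (hD x) hx
      refine hq'.congr_of_eventuallyEq ?_
      filter_upwards [hD.continuous.continuousAt.eventually_ne hx] with y hy
      simp [G, hy]
  have hper : ∀ z w, w ∈ L.pp.lattice → G (z + w) = G z := by
    intro z w hw
    obtain ⟨m, hm, hm0, hmF, hmD⟩ := hq w hw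
    by_cases hx : D z = 0
    · obtain ⟨hFx, hDx⟩ := hz z hx
      have hx' : D (z + w) = 0 := by rw [hmD, hx, mul_zero]
      have e : ∀ f : ℂ → ℂ, Differentiable ℂ f → (∀ z, f (z + w) = m z * f z) → f z = 0 →
          deriv f (z + w) = m z * deriv f z := by
        intro f hf h hfz
        have h1 := (hf (z + w)).hasDerivAt.comp_add_const z w
        have h2 := (hm z).hasDerivAt.mul (hf z).hasDerivAt
        have e : (fun z => f (z + w)) = m * f := funext h
        rw [e] at h1
        rw [h1.unique h2, hfz]; ring
      simp only [G, if_pos hx, if_pos hx']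
      rw [e F hF hmF hFx, e D hD hmD hx, mul_div_mul_left _ _ (hm0 z)]
    · have hx' : D (z + w) ≠ 0 := by rw [hmD]; exact mul_ne_zero (hm0 z) hx
      simp only [G, if_neg hx, if_neg hx']
      rw [hmF, hmD, mul_div_mul_left _ _ (hm0 z)]
  have hconst := hG.apply_eq_apply_of_bounded
    (IsZLattice.isCompact_range_of_periodic L.pp.lattice G hG.continuous hper).isBounded z z0
  by_cases hx : D z = 0
  · exact (hz z hx).1
  · simp only [G, if_neg hx, if_neg h0, h0', zero_div] at hconst
    exact (div_eq_zero_iff.mp hconst).resolve_right hx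

lemma sigma_ne (L : EllLattice) {z : ℂ} (h : ¬ L.mem z) : L.sigma z ≠ 0 := by
  rw [mem_iff] at h
  exact fun h' => h ((L.sigma_eq_zero_iff z).mp h')

/-- The addition formula for zeta. -/
lemma zeta_addition (L : EllLattice) {x y z : ℂ} (hx : L.sigma x ≠ 0) (hy : L.sigma y ≠ 0)
    (hz : L.sigma z ≠ 0) (hxy : L.sigma (x + y) ≠ 0) (hxyz : L.sigma (z + (x + y)) ≠ 0) :
    (L.zeta x + L.zeta y + L.zeta z - L.zeta (z + (x + y))) *
      (L.sigma x * L.sigma y * L.sigma z * L.sigma (z + (x + y))) =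
      L.sigma (x + y) * L.sigma (z + y) * L.sigma (z + x) := by
  have hs := L.sigma_differentiable
  have hs' : Differentiable ℂ (deriv L.sigma) := hs.deriv
  have z0 : L.sigma 0 = 0 := (L.sigma_eq_zero_iff 0).mpr (zero_mem _)
  set s := x + y with hsdef
  let F : ℂ → ℂ := fun z =>
    ((L.zeta x + L.zeta y) * L.sigma z * L.sigma (z + s) + deriv L.sigma z * L.sigma (z + s)
      - L.sigma z * deriv L.sigma (z + s)) * (L.sigma x * L.sigma y)
      - L.sigma s * L.sigma (z + y) * L.sigma (z + x)
  let D : ℂ → ℂ := fun z => L.sigma z * L.sigma (z + s)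
  have hF : Differentiable ℂ F := by
    intro t
    have := hs.comp (differentiable_id.add_const s)
    have := hs.comp (differentiable_id.add_const x)
    have := hs.comp (differentiable_id.add_const y)
    have := hs'.comp (differentiable_id.add_const s)
    simp only [F]
    fun_prop
  have hD : Differentiable ℂ D := hs.mul (hs.comp (differentiable_id.add_const s))
  have hq : ∀ w ∈ L.pp.lattice, ∃ m : ℂ → ℂ, Differentiable ℂ m ∧ (∀ z, m z ≠ 0) ∧
      (∀ z, F (z + w) = m z * F z) ∧ ∀ z, D (z + w) = m z * D z := by
    intro w hw
    obtain ⟨c, η, hc, h⟩ := L.sigma_add hw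
    have h' := L.deriv_sigma_add h
    refine ⟨fun z => c ^ 2 * (Complex.exp (η * z) ^ 2 * Complex.exp (η * s)), by fun_prop, ?_, ?_, ?_⟩
    · intro z
      have h1 := Complex.exp_ne_zero (η * z)
      have h2 := Complex.exp_ne_zero (η * s)
      positivity
    · intro z
      have e : ∀ a, z + w + a = z + a + w := fun a => by ring
      simp only [F]
      rw [e s, e y, e x, h, h, h, h, h', h']
      simp only [mul_add, hsdef, Complex.exp_add]
      ring
    · intro z
      have e : ∀ a, z + w + a = z + a + w := fun a => by ring
      simp only [D]
      rw [e s, h, h]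
      simp only [mul_add, Complex.exp_add]
      ring
  have F0 : F 0 = 0 := by
    simp only [F, z0, L.deriv_sigma_zero, zero_add]; ring
  have Fs : F (-s) = 0 := by
    have e1 : -s + y = -x := by rw [hsdef]; ring
    have e2 : -s + x = -y := by rw [hsdef]; ring
    simp only [F, e1, e2, neg_add_cancel, z0, L.deriv_sigma_zero, sigma_neg]; ring
  have hzD : ∀ z, D z = 0 → F z = 0 ∧ deriv D z ≠ 0 := by
    intro t ht
    have hdD : deriv D t = deriv L.sigma t * L.sigma (t + s) + L.sigma t * deriv L.sigma (t + s) := by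
      have h1 := (hs (t + s)).hasDerivAt.comp_add_const t s
      exact ((hs t).hasDerivAt.mul h1).deriv
    rcases mul_eq_zero.mp ht with h | h
    · have hm := (L.sigma_eq_zero_iff t).mp h
      constructor
      · obtain ⟨m, -, -, h2, -⟩ := hq t hm
        have := h2 0
        rwa [F0, zero_add, mul_zero] at this
      · rw [hdD, h, zero_mul, add_zero]
        refine mul_ne_zero (L.deriv_sigma_ne hm) fun h2 => hxy ?_
        rw [sigma_eq_zero_iff] at h2 ⊢
        simpa using sub_mem h2 hm
    · have hm := (L.sigma_eq_zero_iff _).mp h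
      constructor
      · obtain ⟨m, -, -, h2, -⟩ := hq _ hm
        have := h2 (-s)
        rwa [Fs, mul_zero, show -s + (t + s) = t by ring] at this
      · rw [hdD, h, mul_zero, zero_add]
        refine mul_ne_zero (fun h2 => hxy ?_) (L.deriv_sigma_ne hm)
        rw [sigma_eq_zero_iff] at h2 ⊢
        simpa using sub_mem hm h2
  have ey : -x + s = y := by rw [hsdef]; ring
  have hfin := L.liouville F D hF hD hzD hq (-x)
    (by simp only [D, ey, sigma_neg]; exact mul_ne_zero (neg_ne_zero.mpr hx) hy)
    (by
      simp only [F, ey, sigma_neg, deriv_sigma_neg, neg_add_cancel, z0, zeta]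
      field_simp
      ring) z
  simp only [F] at hfin
  have hzz : L.zeta z * L.sigma z = deriv L.sigma z := div_mul_cancel₀ _ hz
  have hzs : L.zeta (z + s) * L.sigma (z + s) = deriv L.sigma (z + s) := div_mul_cancel₀ _ hxyz
  rw [← hzz, ← hzs] at hfin
  linear_combination hfin

/-- The product formula for `Φ`. -/
lemma Phi_mul (L : EllLattice) {x y a : ℂ} (hx : L.sigma x ≠ 0) (hy : L.sigma y ≠ 0)
    (ha : L.sigma a ≠ 0) (hxy : L.sigma (x + y) ≠ 0) (h : L.sigma (x + y + a) ≠ 0) :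
    L.Phi x a * L.Phi y a =
      L.Phi (x + y) a * (L.zeta x + L.zeta y + L.zeta a - L.zeta (x + y + a)) := by
  have hh : x + y + a = a + (x + y) := by ring
  have := L.zeta_addition hx hy ha hxy (by rwa [← hh])
  unfold Phi
  rw [hh] at h ⊢
  rw [add_comm x a, add_comm y a]
  field_simp
  linear_combination -this

/-- The elliptic partial fraction (Fay) identity for `Φ`. -/
lemma Phi_fay (L : EllLattice) {x d k b : ℂ} (hx : L.sigma x ≠ 0) (hd : L.sigma d ≠ 0)
    (hk : L.sigma k ≠ 0) (hb : L.sigma b ≠ 0) (hkb : L.sigma (k + b) ≠ 0)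
    (hxd : L.sigma (x + d) ≠ 0) (hxk : L.sigma (x + k) ≠ 0) (hs : L.sigma (x + k + d) ≠ 0)
    (hsb : L.sigma (x + k + d + b) ≠ 0) :
    L.Phi x (k + b) * L.Phi d b = L.Phi x k * L.Phi (x + d) b
      + L.Phi (x + d) (k + b) * L.Phi d (-k) := by
  have hk' : L.sigma (-k) ≠ 0 := by rw [sigma_neg]; exact neg_ne_zero.mpr hk
  have A := L.zeta_addition hxk hd hb hs (by rwa [add_comm])
  have B := L.zeta_addition hk hxd hb (by rwa [show k + (x + d) = x + k + d by ring])
    (by rwa [show b + (k + (x + d)) = x + k + d + b by ring])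
  have C := L.zeta_addition hxk hd hk' hs (by rwa [show -k + (x + k + d) = x + d by ring])
  rw [show b + (x + k + d) = x + k + d + b by ring, show b + (x + k) = x + (k + b) by ring,
    show b + d = d + b by ring] at A
  rw [show b + (k + (x + d)) = x + k + d + b by ring, show k + (x + d) = x + k + d by ring,
    show b + (x + d) = x + d + b by ring, show b + k = k + b by ring] at B
  rw [show -k + (x + k + d) = x + d by ring, show -k + d = d + -k by ring,
    show -k + (x + k) = x by ring, sigma_neg, zeta_neg] at C
  have key : L.sigma (x + (k + b)) * L.sigma (d + b) * L.sigma k * L.sigma (x + d)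
      - L.sigma (k + b) * L.sigma (x + d + b) * L.sigma (x + k) * L.sigma d
      + L.sigma x * L.sigma (d + -k) * L.sigma b * L.sigma (x + k + d + b) = 0 := by
    refine (mul_eq_zero.mp ?_).resolve_left hs
    linear_combination -A * (L.sigma k * L.sigma (x + d)) + B * (L.sigma (x + k) * L.sigma d)
      - C * (L.sigma b * L.sigma (x + k + d + b))
  unfold Phi
  rw [sigma_neg, show x + d + (k + b) = x + k + d + b by ring]
  field_simp
  linear_combination key

end EllLattice

namespace KPData

variable {N N' : ℕ}

lemma gen_ij (D : KPData N N') {α : ℂ} (hgen : D.Generic ![α]) (i : Fin N) (j : Fin N')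
    (c0 cn cm ch k l e : ℤ) {z : ℂ}
    (hz : z = c0 * D.xi0 + cn * D.del + cm * D.eps + ch * D.lam + k * D.κ i + l * D.κ' j + e * α)
    (hne : ¬ (c0 = 0 ∧ cn = 0 ∧ cm = 0 ∧ ch = 0 ∧ k = 0 ∧ l = 0 ∧ e = 0)) :
    D.L.sigma z ≠ 0 := by
  apply D.L.sigma_ne
  have := hgen c0 cn cm ch (Pi.single i k) (Pi.single j l) (fun _ => e) (by
    rintro ⟨h1, h2, h3, h4, h5, h6, h7⟩
    refine hne ⟨h1, h2, h3, h4, ?_, ?_, ?_⟩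
    · simpa using congrFun h5 i
    · simpa using congrFun h6 j
    · simpa using congrFun h7 0)
  convert this using 1
  rw [hz]
  simp [Pi.single_apply, ite_smul]

lemma gen_i (D : KPData N N') {α : ℂ} (hgen : D.Generic ![α]) (i : Fin N)
    (c0 cn cm ch k e : ℤ) {z : ℂ}
    (hz : z = c0 * D.xi0 + cn * D.del + cm * D.eps + ch * D.lam + k * D.κ i + e * α)
    (hne : ¬ (c0 = 0 ∧ cn = 0 ∧ cm = 0 ∧ ch = 0 ∧ k = 0 ∧ e = 0)) :
    D.L.sigma z ≠ 0 := by
  apply D.L.sigma_ne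
  have := hgen c0 cn cm ch (Pi.single i k) 0 (fun _ => e) (by
    rintro ⟨h1, h2, h3, h4, h5, h6, h7⟩
    refine hne ⟨h1, h2, h3, h4, ?_, ?_⟩
    · simpa using congrFun h5 i
    · simpa using congrFun h7 0)
  convert this using 1
  rw [hz]
  simp [Pi.single_apply, ite_smul]

lemma gen_j (D : KPData N N') {α : ℂ} (hgen : D.Generic ![α]) (j : Fin N')
    (c0 cn cm ch l e : ℤ) {z : ℂ}
    (hz : z = c0 * D.xi0 + cn * D.del + cm * D.eps + ch * D.lam + l * D.κ' j + e * α)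
    (hne : ¬ (c0 = 0 ∧ cn = 0 ∧ cm = 0 ∧ ch = 0 ∧ l = 0 ∧ e = 0)) :
    D.L.sigma z ≠ 0 := by
  apply D.L.sigma_ne
  have := hgen c0 cn cm ch 0 (Pi.single j l) (fun _ => e) (by
    rintro ⟨h1, h2, h3, h4, h5, h6, h7⟩
    refine hne ⟨h1, h2, h3, h4, ?_, ?_⟩
    · simpa using congrFun h6 j
    · simpa using congrFun h7 0)
  convert this using 1
  rw [hz]
  simp [Pi.single_apply, ite_smul]

lemma gen_0 (D : KPData N N') {α : ℂ} (hgen : D.Generic ![α])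
    (c0 cn cm ch e : ℤ) {z : ℂ}
    (hz : z = c0 * D.xi0 + cn * D.del + cm * D.eps + ch * D.lam + e * α)
    (hne : ¬ (c0 = 0 ∧ cn = 0 ∧ cm = 0 ∧ ch = 0 ∧ e = 0)) :
    D.L.sigma z ≠ 0 := by
  apply D.L.sigma_ne
  have := hgen c0 cn cm ch 0 0 (fun _ => e) (by
    rintro ⟨h1, h2, h3, h4, h5, h6, h7⟩
    refine hne ⟨h1, h2, h3, h4, ?_⟩
    simpa using congrFun h7 0)
  convert this using 1
  rw [hz]
  simp

/-- Gauge-reduced plane wave factors. -/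
def Rf (D : KPData N N') (i : Fin N) (n m h : ℤ) : ℂ :=
  D.L.Phi D.del (-(D.κ i)) ^ n * D.L.Phi D.eps (-(D.κ i)) ^ m *
    D.L.Phi D.lam (-(D.κ i)) ^ h * D.ρ0 i

/-- Gauge-reduced plane wave factors. -/
def Nf (D : KPData N N') (j : Fin N') (n m h : ℤ) : ℂ :=
  D.L.Phi D.del (D.κ' j) ^ (-n) * D.L.Phi D.eps (D.κ' j) ^ (-m) *
    D.L.Phi D.lam (D.κ' j) ^ (-h) * D.ν0 j

lemma exp_Psi_neg (L : EllLattice) (x k : ℂ) :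
    Complex.exp (-(L.zeta x) * k) * L.Psi x (-k) = L.Phi x (-k) := by
  unfold EllLattice.Psi
  rw [mul_left_comm, ← Complex.exp_add]
  simp

lemma exp_Psi (L : EllLattice) (x k : ℂ) :
    Complex.exp (L.zeta x * k) * L.Psi x k = L.Phi x k := by
  unfold EllLattice.Psi
  rw [mul_left_comm, ← Complex.exp_add]
  simp

lemma ρ_eq (D : KPData N N') (i : Fin N) (n m h : ℤ) :
    D.ρ i n m h = D.Rf i n m h * Complex.exp (D.L.zeta (D.xi n m h) * D.κ i) := by
  unfold ρ Rf
  simp only [exp_Psi_neg]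
  ring

lemma ν_eq (D : KPData N N') (j : Fin N') (n m h : ℤ) :
    D.ν j n m h = D.Nf j n m h * Complex.exp (D.L.zeta (D.xi n m h) * D.κ' j) := by
  unfold ν Nf
  simp only [exp_Psi]
  ring

lemma r_eq (D : KPData N N') (i : Fin N) (n m h : ℤ) :
    D.r n m h i = D.Rf i n m h * D.L.Phi (D.xi n m h) (D.κ i) := by
  unfold r
  rw [ρ_eq, mul_assoc, exp_Psi]

lemma s_eq (D : KPData N N') (j : Fin N') (n m h : ℤ) :
    D.s n m h j = D.Nf j n m h * D.L.Phi (D.xi n m h) (D.κ' j) := by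
  unfold s
  rw [ν_eq, mul_assoc, exp_Psi]

lemma M_eq (D : KPData N N') (i : Fin N) (j : Fin N') (n m h : ℤ) :
    D.M n m h i j =
      D.Rf i n m h * D.L.Phi (D.xi n m h) (D.κ i + D.κ' j) * D.Nf j n m h := by
  unfold M
  rw [Matrix.of_apply, ρ_eq, ν_eq, ← exp_Psi, mul_add, Complex.exp_add]
  ring

/-- The vector `a_i = R_i Φ_ξ(κ_i + α)`. -/
def av (D : KPData N N') (α : ℂ) (n m h : ℤ) : Fin N → ℂ :=
  fun i => D.Rf i n m h * D.L.Phi (D.xi n m h) (D.κ i + α)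

/-- The solution of the linear system with right hand side `a`. -/
def xv (D : KPData N N') (α : ℂ) (n m h : ℤ) : Fin N → ℂ :=
  (1 + D.M n m h * D.C)⁻¹ *ᵥ D.av α n m h

lemma push_through (M : Matrix (Fin N) (Fin N') ℂ) (C : Matrix (Fin N') (Fin N) ℂ)
    (h : IsUnit ((1 + M * C).det)) : (1 + C * M)⁻¹ * C = C * (1 + M * C)⁻¹ := by
  have h' : IsUnit ((1 + C * M).det) := by rwa [Matrix.det_one_add_mul_comm]
  have e : (1 + C * M) * C = C * (1 + M * C) := by
    rw [Matrix.add_mul, Matrix.mul_add, Matrix.one_mul, Matrix.mul_one, Matrix.mul_assoc]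
  calc (1 + C * M)⁻¹ * C = (1 + C * M)⁻¹ * (C * (1 + M * C)) * (1 + M * C)⁻¹ := by
        rw [Matrix.mul_assoc, Matrix.mul_assoc, Matrix.mul_nonsing_inv _ h, Matrix.mul_one]
    _ = C * (1 + M * C)⁻¹ := by
        rw [← e, Matrix.nonsing_inv_mul_cancel_left _ _ h']

lemma linear_step (M M' : Matrix (Fin N) (Fin N') ℂ) (C : Matrix (Fin N') (Fin N) ℂ)
    (r a a' : Fin N → ℂ) (s' : Fin N' → ℂ) (p f : ℂ)
    (h : IsUnit ((1 + M * C).det)) (h' : IsUnit ((1 + M' * C).det))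
    (hM : M' = M - Matrix.vecMulVec r s') (ha : a' = p • a - f • r) :
    (1 + M' * C)⁻¹ *ᵥ a' = p • ((1 + M * C)⁻¹ *ᵥ a)
      - (f - s' ⬝ᵥ (C *ᵥ ((1 + M' * C)⁻¹ *ᵥ a'))) • ((1 + M * C)⁻¹ *ᵥ r) := by
  set X := (1 + M' * C)⁻¹ *ᵥ a' with hX
  have h1 : (1 + M' * C) *ᵥ X = a' := by
    rw [hX, Matrix.mulVec_mulVec, Matrix.mul_nonsing_inv _ h', Matrix.one_mulVec]
  have h2 : (1 + M * C) *ᵥ X = p • a - (f - s' ⬝ᵥ (C *ᵥ X)) • r := by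
    have e : (1 + M * C) = (1 + M' * C) + Matrix.vecMulVec r s' * C := by
      rw [hM, Matrix.sub_mul]; abel
    rw [e, Matrix.add_mulVec, h1, ha, ← Matrix.mulVec_mulVec, Matrix.vecMulVec_mulVec]
    ext i
    simp [mul_comm]
    ring
  calc X = (1 + M * C)⁻¹ *ᵥ ((1 + M * C) *ᵥ X) := by
        rw [Matrix.mulVec_mulVec, Matrix.nonsing_inv_mul _ h, Matrix.one_mulVec]
    _ = _ := by rw [h2, Matrix.mulVec_sub, Matrix.mulVec_smul, Matrix.mulVec_smul]

lemma xi_cast (D : KPData N N') (n m h : ℤ) :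
    D.xi n m h = D.xi0 + n * D.del + m * D.eps + h * D.lam := by
  simp [xi]

lemma Phi_comm (L : EllLattice) (x y : ℂ) : L.Phi x y = L.Phi y x := by
  unfold EllLattice.Phi
  rw [add_comm, mul_comm]

lemma calV_eq (D : KPData N N') (α : ℂ) (hgen : D.Generic ![α])
    (hInv : ∀ n m h : ℤ, IsUnit ((1 + D.M n m h * D.C).det))
    (hχα : ∀ (n m h : ℤ) (i : Fin N), D.L.chi α (D.κ i) (D.xi n m h) ≠ 0) (n m h : ℤ) :
    D.calV α n m h = D.L.Phi (D.xi n m h) α - D.s n m h ⬝ᵥ (D.C *ᵥ D.xv α n m h) := by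
  have ha : D.L.Phi (D.xi n m h) α • ((D.DK α n m h)⁻¹ *ᵥ D.r n m h) = D.av α n m h := by
    have hdiag : D.DK α n m h *ᵥ D.av α n m h = D.L.Phi (D.xi n m h) α • D.r n m h := by
      ext i
      rw [DK, Matrix.mulVec_diagonal, Pi.smul_apply, smul_eq_mul, r_eq, av]
      have := D.L.Phi_mul (x := D.κ i) (y := α) (a := D.xi n m h)
        (D.gen_i hgen i 0 0 0 0 1 0 (by push_cast; ring) (by simp))
        (D.gen_0 hgen 0 0 0 0 1 (by push_cast; ring) (by simp))
        (D.gen_0 hgen 1 n m h 0 (by rw [xi_cast]; push_cast; ring) (by simp))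
        (D.gen_i hgen i 0 0 0 0 1 1 (by push_cast; ring) (by simp))
        (D.gen_i hgen i 1 n m h 1 1 (by rw [xi_cast]; push_cast; ring) (by simp))
      rw [Phi_comm _ (D.κ i), Phi_comm _ α, Phi_comm _ (D.κ i + α)] at this
      rw [EllLattice.chi, show D.xi n m h + α + D.κ i = D.κ i + α + D.xi n m h by ring]
      linear_combination -(D.Rf i n m h) * this
    have hu : IsUnit (D.DK α n m h).det := by
      rw [DK, Matrix.det_diagonal]
      exact isUnit_iff_ne_zero.mpr (Finset.prod_ne_zero_iff.mpr fun i _ => hχα n m h i)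
    rw [← Matrix.mulVec_smul, ← hdiag, Matrix.mulVec_mulVec, Matrix.nonsing_inv_mul _ hu,
      Matrix.one_mulVec]
  rw [xv, ← ha, calV, V, Matrix.mulVec_mulVec (v := (D.DK α n m h)⁻¹ *ᵥ D.r n m h),
    push_through _ _ (hInv n m h), Matrix.mulVec_smul, Matrix.mulVec_smul, Matrix.mulVec_mulVec,
    dotProduct_smul, smul_eq_mul, mul_sub, mul_one]
  simp only [Matrix.mulVec_mulVec, Matrix.mul_assoc]

lemma xv_step (D : KPData N N') (α : ℂ) (hgen : D.Generic ![α])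
    (hInv : ∀ n m h : ℤ, IsUnit ((1 + D.M n m h * D.C).det))
    (hχα : ∀ (n m h : ℤ) (i : Fin N), D.L.chi α (D.κ i) (D.xi n m h) ≠ 0)
    (n m h n' m' cn cm : ℤ) (d : ℂ) (hd : d = cn * D.del + cm * D.eps)
    (hc : ¬ (cn = 0 ∧ cm = 0)) (hn : n' = n + cn) (hm : m' = m + cm)
    (hR : ∀ i, D.Rf i n' m' h = D.Rf i n m h * D.L.Phi d (-(D.κ i)))
    (hN : ∀ j, D.Nf j n m h = D.Nf j n' m' h * D.L.Phi d (D.κ' j)) :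
    D.xv α n' m' h = D.L.Phi d α • D.xv α n m h - D.calV α n' m' h • D.u0 n m h := by
  have hxi : D.xi n' m' h = D.xi n m h + d := by
    rw [xi_cast, xi_cast, hd, hn, hm]; push_cast; ring
  have hx : D.L.sigma (D.xi n m h) ≠ 0 :=
    D.gen_0 hgen 1 n m h 0 (by rw [xi_cast]; push_cast; ring) (by simp)
  have hd' : D.L.sigma d ≠ 0 :=
    D.gen_0 hgen 0 cn cm 0 0 (by rw [hd]; push_cast; ring) (by tauto)
  have hxd : D.L.sigma (D.xi n m h + d) ≠ 0 :=
    D.gen_0 hgen 1 (n + cn) (m + cm) h 0 (by rw [xi_cast, hd]; push_cast; ring) (by simp)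
  have hκ : ∀ i, D.L.sigma (D.κ i) ≠ 0 := fun i =>
    D.gen_i hgen i 0 0 0 0 1 0 (by push_cast; ring) (by simp)
  have hxk : ∀ i, D.L.sigma (D.xi n m h + D.κ i) ≠ 0 := fun i =>
    D.gen_i hgen i 1 n m h 1 0 (by rw [xi_cast]; push_cast; ring) (by simp)
  have hxkd : ∀ i, D.L.sigma (D.xi n m h + D.κ i + d) ≠ 0 := fun i =>
    D.gen_i hgen i 1 (n + cn) (m + cm) h 1 0 (by rw [xi_cast, hd]; push_cast; ring) (by simp)
  rw [calV_eq D α hgen hInv hχα, u0]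
  refine linear_step (D.M n m h) (D.M n' m' h) D.C (D.r n m h) _ _ (D.s n' m' h) _ _
    (hInv _ _ _) (hInv _ _ _) ?_ ?_
  · ext i j
    rw [Matrix.sub_apply, Matrix.vecMulVec_apply, M_eq, M_eq, r_eq, s_eq, hR, hN, hxi]
    have := D.L.Phi_fay hx hd' (hκ i)
      (D.gen_j hgen j 0 0 0 0 1 0 (z := D.κ' j) (by push_cast; ring) (by simp))
      (D.gen_ij hgen i j 0 0 0 0 1 1 0 (by push_cast; ring) (by simp))
      hxd (hxk i) (hxkd i)
      (D.gen_ij hgen i j 1 (n + cn) (m + cm) h 1 1 0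
        (by rw [xi_cast, hd]; push_cast; ring) (by simp))
    linear_combination -(D.Rf i n m h) * (D.Nf j n' m' h) * this
  · ext i
    simp only [Pi.sub_apply, Pi.smul_apply, smul_eq_mul, av, r_eq, hR, hxi]
    have := D.L.Phi_fay hx hd' (hκ i)
      (D.gen_0 hgen 0 0 0 0 1 (z := α) (by push_cast; ring) (by simp))
      (D.gen_i hgen i 0 0 0 0 1 1 (by push_cast; ring) (by simp))
      hxd (hxk i) (hxkd i)
      (D.gen_i hgen i 1 (n + cn) (m + cm) h 1 1
        (by rw [xi_cast, hd]; push_cast; ring) (by simp))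
    linear_combination -(D.Rf i n m h) * this

lemma Phi_ne (L : EllLattice) {x y : ℂ} (hx : L.sigma x ≠ 0) (hy : L.sigma y ≠ 0)
    (hxy : L.sigma (x + y) ≠ 0) : L.Phi x y ≠ 0 :=
  div_ne_zero hxy (mul_ne_zero hx hy)

lemma Phi_theta (L : EllLattice) {x y d e a : ℂ} (hxy : x + d = y + e)
    (hx : L.sigma x ≠ 0) (hy : L.sigma y ≠ 0) (hd : L.sigma d ≠ 0) (he : L.sigma e ≠ 0)
    (ha : L.sigma a ≠ 0) (hxd : L.sigma (x + d) ≠ 0) (hxda : L.sigma (x + d + a) ≠ 0) :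
    L.Phi d a * L.Phi x a - L.Phi e a * L.Phi y a =
      (L.zeta x + L.zeta d - L.zeta y - L.zeta e) * L.Phi (x + d) a := by
  have h1 := L.Phi_mul hx hd ha hxd hxda
  have h2 := L.Phi_mul hy he ha (by rwa [← hxy]) (by rwa [← hxy])
  rw [← hxy] at h2
  linear_combination h1 - h2

end KPData

/-- The gauge variable `𝒱_α = Φ_ξ(α)·V_α` satisfies
`(ŵ − w̃)·𝒱̂̃_α = Φ_δ(α)·𝒱̂_α − Φ_ε(α)·𝒱̃_α`. -/
theorem calV_w_relation {N N' : ℕ} (D : KPData N N') (α : ℂ)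
    (hρ0 : ∀ i, D.ρ0 i ≠ 0) (hν0 : ∀ j, D.ν0 j ≠ 0)
    (hgen : D.Generic ![α])
    (hInv : ∀ n m h : ℤ, IsUnit ((1 + D.M n m h * D.C).det))
    (hχα : ∀ (n m h : ℤ) (i : Fin N), D.L.chi α (D.κ i) (D.xi n m h) ≠ 0) :
    ∀ n m h : ℤ,
      (D.w n (m + 1) h - D.w (n + 1) m h) * D.calV α (n + 1) (m + 1) h =
        D.L.Phi D.del α * D.calV α n (m + 1) h -
          D.L.Phi D.eps α * D.calV α (n + 1) m h := by
  intro n m h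
  have hκ : ∀ i, D.L.sigma (-(D.κ i)) ≠ 0 := fun i =>
    D.gen_i hgen i 0 0 0 0 (-1) 0 (by push_cast; ring) (by simp)
  have hκ' : ∀ j, D.L.sigma (D.κ' j) ≠ 0 := fun j =>
    D.gen_j hgen j 0 0 0 0 1 0 (by push_cast; ring) (by simp)
  have hα : D.L.sigma α ≠ 0 := D.gen_0 hgen 0 0 0 0 1 (by push_cast; ring) (by simp)
  have hδ : D.L.sigma D.del ≠ 0 := D.gen_0 hgen 0 1 0 0 0 (by push_cast; ring) (by simp)
  have hε : D.L.sigma D.eps ≠ 0 := D.gen_0 hgen 0 0 1 0 0 (by push_cast; ring) (by simp)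
  have pδ : ∀ i, D.L.Phi D.del (-(D.κ i)) ≠ 0 := fun i => KPData.Phi_ne _ hδ (hκ i)
    (D.gen_i hgen i 0 1 0 0 (-1) 0 (by push_cast; ring) (by simp))
  have pε : ∀ i, D.L.Phi D.eps (-(D.κ i)) ≠ 0 := fun i => KPData.Phi_ne _ hε (hκ i)
    (D.gen_i hgen i 0 0 1 0 (-1) 0 (by push_cast; ring) (by simp))
  have qδ : ∀ j, D.L.Phi D.del (D.κ' j) ≠ 0 := fun j => KPData.Phi_ne _ hδ (hκ' j)
    (D.gen_j hgen j 0 1 0 0 1 0 (by push_cast; ring) (by simp))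
  have qε : ∀ j, D.L.Phi D.eps (D.κ' j) ≠ 0 := fun j => KPData.Phi_ne _ hε (hκ' j)
    (D.gen_j hgen j 0 0 1 0 1 0 (by push_cast; ring) (by simp))
  have Nδ : ∀ m j, D.Nf j n m h = D.Nf j (n + 1) m h * D.L.Phi D.del (D.κ' j) := fun m j => by
    unfold KPData.Nf
    rw [show -n = -(n + 1) + 1 by ring, zpow_add_one₀ (qδ j)]
    ring
  have Nε : ∀ n j, D.Nf j n m h = D.Nf j n (m + 1) h * D.L.Phi D.eps (D.κ' j) := fun n j => by
    unfold KPData.Nf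
    rw [show -m = -(m + 1) + 1 by ring, zpow_add_one₀ (qε j)]
    ring
  have s1 := D.xv_step α hgen hInv hχα n (m + 1) h (n + 1) (m + 1) 1 0 D.del
    (by push_cast; ring) (by simp) rfl (by ring)
    (fun i => by unfold KPData.Rf; rw [zpow_add_one₀ (pδ i)]; ring) (Nδ _)
  have s2 := D.xv_step α hgen hInv hχα (n + 1) m h (n + 1) (m + 1) 0 1 D.eps
    (by push_cast; ring) (by simp) (by ring) rfl
    (fun i => by unfold KPData.Rf; rw [zpow_add_one₀ (pε i)]; ring) (Nε _)
  have x1 : D.xi (n + 1) (m + 1) h = D.xi n (m + 1) h + D.del := by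
    simp only [KPData.xi_cast]; push_cast; ring
  have x2 : D.xi n (m + 1) h + D.del = D.xi (n + 1) m h + D.eps := by
    simp only [KPData.xi_cast]; push_cast; ring
  have hx : D.L.sigma (D.xi n (m + 1) h) ≠ 0 :=
    D.gen_0 hgen 1 n (m + 1) h 0 (by rw [KPData.xi_cast]; push_cast; ring) (by simp)
  have hy : D.L.sigma (D.xi (n + 1) m h) ≠ 0 :=
    D.gen_0 hgen 1 (n + 1) m h 0 (by rw [KPData.xi_cast]; push_cast; ring) (by simp)
  have hxd : D.L.sigma (D.xi n (m + 1) h + D.del) ≠ 0 :=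
    D.gen_0 hgen 1 (n + 1) (m + 1) h 0 (by rw [KPData.xi_cast]; push_cast; ring) (by simp)
  have tα := KPData.Phi_theta D.L (a := α) x2 hx hy hδ hε hα hxd
    (D.gen_0 hgen 1 (n + 1) (m + 1) h 1 (by rw [KPData.xi_cast]; push_cast; ring) (by simp))
  rw [← x1] at tα
  have ts : D.s n (m + 1) h - D.s (n + 1) m h =
      (D.L.zeta (D.xi n (m + 1) h) + D.L.zeta D.del - D.L.zeta (D.xi (n + 1) m h)
        - D.L.zeta D.eps) • D.s (n + 1) (m + 1) h := by
    ext j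
    have := KPData.Phi_theta D.L (a := D.κ' j) x2 hx hy hδ hε (hκ' j) hxd
      (D.gen_j hgen j 1 (n + 1) (m + 1) h 1 0
        (by rw [KPData.xi_cast]; push_cast; ring) (by simp))
    rw [← x1] at this
    rw [Pi.sub_apply, Pi.smul_apply, smul_eq_mul, KPData.s_eq, KPData.s_eq, KPData.s_eq,
      Nδ (m + 1) j, Nε (n + 1) j]
    linear_combination (D.Nf j (n + 1) (m + 1) h) * this
  have e1 := congrArg (fun v => D.s n (m + 1) h ⬝ᵥ (D.C *ᵥ v)) s1
  have e2 := congrArg (fun v => D.s (n + 1) m h ⬝ᵥ (D.C *ᵥ v)) s2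
  have e3 := congrArg (fun v => v ⬝ᵥ (D.C *ᵥ D.xv α (n + 1) (m + 1) h)) ts
  simp only [Matrix.mulVec_sub, Matrix.mulVec_smul, dotProduct_sub, dotProduct_smul,
    sub_dotProduct, smul_dotProduct, smul_eq_mul] at e1 e2 e3
  have c1 := D.calV_eq α hgen hInv hχα n (m + 1) h
  have c2 := D.calV_eq α hgen hInv hχα (n + 1) m h
  have c3 := D.calV_eq α hgen hInv hχα (n + 1) (m + 1) h
  have w1 : D.w0 n (m + 1) h = D.s n (m + 1) h ⬝ᵥ (D.C *ᵥ D.u0 n (m + 1) h) := rfl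
  have w2 : D.w0 (n + 1) m h = D.s (n + 1) m h ⬝ᵥ (D.C *ᵥ D.u0 (n + 1) m h) := rfl
  rw [← w1] at e1
  rw [← w2] at e2
  have hw : D.w n (m + 1) h - D.w (n + 1) m h =
      D.L.zeta (D.xi n (m + 1) h) + D.L.zeta D.del - D.L.zeta (D.xi (n + 1) m h)
        - D.L.zeta D.eps - D.w0 n (m + 1) h + D.w0 (n + 1) m h := by
    simp only [KPData.w, zsmul_eq_mul]
    push_cast
    ring
  rw [hw, c1, c2]
  linear_combination (D.L.zeta (D.xi n (m + 1) h) + D.L.zeta D.del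
    - D.L.zeta (D.xi (n + 1) m h) - D.L.zeta D.eps) * c3 - tα - e1 + e2 + e3
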